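/- (Lemma 1.2.1) Fix d ≥ 1 and 0 ≤ r ≤ d−1. Then GSp_{2d}(𝔸_f) = P_r(ℚ)·Q_r(𝔸_f)·GSp_{2d}(Ẑ): every g ∈ GSp_{2d}(𝔸_f) can be written g = p·q·k with p ∈ P_r(ℚ), q ∈ Q_r(𝔸_f) and k ∈ GSp_{2d}(Ẑ). Equivalently, the double quotient P_r(ℚ)Q_r(𝔸_f) \ GSp_{2d}(𝔸_f) / GSp_{2d}(Ẑ) is a singleton. -/

import Mathlib

open Matrix
open scoped TensorProduct

noncomputable section

/-- The profinite completion `Ẑ` of `ℤ`, as the inverse limit of the rings `ℤ/nℤ`. -/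
def ZHat : Subring (∀ n : ℕ+, ZMod (n : ℕ)) where
  carrier := {x | ∀ (m k : ℕ+) (h : (m : ℕ) ∣ (k : ℕ)), ZMod.castHom h (ZMod (m : ℕ)) (x k) = x m}
  zero_mem' := by intro m k h; simp only [Pi.zero_apply, _root_.map_zero]
  one_mem' := by intro m k h; simp only [Pi.one_apply, _root_.map_one]
  add_mem' := by intro a b ha hb m k h; simp only [Pi.add_apply, _root_.map_add, ha m k h, hb m k h]
  mul_mem' := by intro a b ha hb m k h; simp only [Pi.mul_apply, _root_.map_mul, ha m k h, hb m k h]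
  neg_mem' := by intro a ha m k h; simp only [Pi.neg_apply, _root_.map_neg, ha m k h]

/-- Reduction modulo `n`, as a ring homomorphism `Ẑ → ℤ/nℤ`. -/
def projZHat (n : ℕ+) : ↥ZHat →+* ZMod (n : ℕ) :=
  (Pi.evalRingHom (fun k : ℕ+ => ZMod (k : ℕ)) n).comp ZHat.subtype

/-- The ring of finite adeles of `ℚ`, presented as `Ẑ ⊗_ℤ ℚ`. -/
abbrev AQf : Type := ↥ZHat ⊗[ℤ] ℚ

/-- The inclusion `Ẑ → 𝔸_f`. -/
def zhatToA : ↥ZHat →+* AQf := Algebra.TensorProduct.includeLeftRingHom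

/-- The diagonal inclusion `ℚ → 𝔸_f`. -/
def ratToA : ℚ →+* AQf := (Algebra.TensorProduct.includeRight).toRingHom

/-- Functoriality of `GL_m` in the ring. -/
def glMap {m : ℕ} {R S : Type*} [CommRing R] [CommRing S] (f : R →+* S) :
    GL (Fin m) R →* GL (Fin m) S :=
  Units.map (f.mapMatrix : Matrix (Fin m) (Fin m) R →+* Matrix (Fin m) (Fin m) S).toMonoidHom

/-- The `d × d` antidiagonal matrix `J_d`. -/
def Jmat (d : ℕ) (R : Type*) [CommRing R] : Matrix (Fin d) (Fin d) R :=
  Matrix.of fun i j => if (i : ℕ) + (j : ℕ) + 1 = d then 1 else 0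

/-- The standard symplectic similitude form `J_{d,d} = [[0, J_d], [-J_d, 0]]`. -/
def Jsymp (d : ℕ) (R : Type*) [CommRing R] : Matrix (Fin (2 * d)) (Fin (2 * d)) R :=
  Matrix.of fun i j =>
    if (i : ℕ) + (j : ℕ) + 1 = 2 * d then (if (i : ℕ) < d then 1 else -1) else 0

private lemma conj_aux {n : ℕ} {R : Type*} [CommRing R]
    (A B J : Matrix (Fin n) (Fin n) R) :
    Bᵀ * (Aᵀ * J * A) * B = (A * B)ᵀ * J * (A * B) := by
  simp only [Matrix.transpose_mul, Matrix.mul_assoc]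

/-- The symplectic similitude group `GSp_{2d}(R)`, with the similitude factor recorded:
pairs `(g, c)` with `ᵗg · J_{d,d} · g = c · J_{d,d}`.  For `d ≥ 1` the similitude `c` is
uniquely determined by `g`. -/
def GSpP (d : ℕ) (R : Type*) [CommRing R] : Subgroup (GL (Fin (2 * d)) R × Rˣ) where
  carrier := {x | ((x.1 : Matrix (Fin (2 * d)) (Fin (2 * d)) R))ᵀ * Jsymp d R *
      (x.1 : Matrix (Fin (2 * d)) (Fin (2 * d)) R) = ((x.2 : Rˣ) : R) • Jsymp d R}
  one_mem' := by
    simp only [Set.mem_setOf_eq, Prod.fst_one, Prod.snd_one, Units.val_one, one_smul]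
    simp
  mul_mem' := by
    intro a b ha hb
    simp only [Set.mem_setOf_eq] at ha hb ⊢
    have h1 : ((a * b).1 : Matrix (Fin (2 * d)) (Fin (2 * d)) R)
        = (a.1 : Matrix (Fin (2 * d)) (Fin (2 * d)) R) *
          (b.1 : Matrix (Fin (2 * d)) (Fin (2 * d)) R) := rfl
    have h2 : (((a * b).2 : Rˣ) : R) = ((a.2 : Rˣ) : R) * ((b.2 : Rˣ) : R) := rfl
    rw [h1, h2, ← conj_aux, ha, Matrix.mul_smul, Matrix.smul_mul, hb, smul_smul]
  inv_mem' := by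
    intro a ha
    simp only [Set.mem_setOf_eq] at ha ⊢
    have h1 : ((a⁻¹).1 : Matrix (Fin (2 * d)) (Fin (2 * d)) R)
        = (((a.1)⁻¹ : GL (Fin (2 * d)) R) : Matrix (Fin (2 * d)) (Fin (2 * d)) R) := rfl
    have h2 : (((a⁻¹).2 : Rˣ) : R) = (((a.2)⁻¹ : Rˣ) : R) := rfl
    have hJ : Jsymp d R = (((a.2)⁻¹ : Rˣ) : R) •
        ((a.1 : Matrix (Fin (2 * d)) (Fin (2 * d)) R)ᵀ * Jsymp d R *
          (a.1 : Matrix (Fin (2 * d)) (Fin (2 * d)) R)) := by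
      rw [ha, smul_smul, ← Units.val_mul, inv_mul_cancel, Units.val_one, one_smul]
    rw [h1, h2]
    conv_lhs => rw [hJ]
    rw [Matrix.mul_smul, Matrix.smul_mul, conj_aux, Units.mul_inv]
    simp

/-- The symplectic similitude group `GSp_{2d}(R)` as a matrix group. -/
def GSp (d : ℕ) (R : Type*) [CommRing R] : Subgroup (GL (Fin (2 * d)) R) :=
  (GSpP d R).map (MonoidHom.fst _ _)

/-- Index of the block (of sizes `d-r`, `2r`, `d-r`) that the `i`-th coordinate belongs to. -/
def blk (d r : ℕ) (i : ℕ) : ℕ := if i < d - r then 0 else if i < d + r then 1 else 2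

/-- The standard maximal parabolic subgroup `P_r` of `GSp_{2d}`:
elements of `GSp_{2d}` that are block upper triangular for the partition `(d-r, 2r, d-r)`. -/
def PrSet (d r : ℕ) (R : Type*) [CommRing R] : Set (GL (Fin (2 * d)) R) :=
  {g | g ∈ GSp d R ∧
    ∀ i j : Fin (2 * d), blk d r (j : ℕ) < blk d r (i : ℕ) →
      (g : Matrix (Fin (2 * d)) (Fin (2 * d)) R) i j = 0}

/-- The unipotent radical `N_r` of `P_r`: block upper triangular elements of `GSp_{2d}`
whose diagonal blocks are identity matrices. -/
def NrSet (d r : ℕ) (R : Type*) [CommRing R] : Set (GL (Fin (2 * d)) R) :=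
  {g | g ∈ GSp d R ∧
    (∀ i j : Fin (2 * d), blk d r (j : ℕ) < blk d r (i : ℕ) →
      (g : Matrix (Fin (2 * d)) (Fin (2 * d)) R) i j = 0) ∧
    (∀ i j : Fin (2 * d), blk d r (i : ℕ) = blk d r (j : ℕ) →
      (g : Matrix (Fin (2 * d)) (Fin (2 * d)) R) i j = if i = j then 1 else 0)}

/-- The subgroup `Q_r` of `P_r`: block upper triangular elements of `GSp_{2d}` with
last diagonal block the identity and first diagonal block the similitude times the identity. -/
def QrSet (d r : ℕ) (R : Type*) [CommRing R] : Set (GL (Fin (2 * d)) R) :=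
  {g | ∃ c : Rˣ,
    (g : Matrix (Fin (2 * d)) (Fin (2 * d)) R)ᵀ * Jsymp d R *
      (g : Matrix (Fin (2 * d)) (Fin (2 * d)) R) = (c : R) • Jsymp d R ∧
    (∀ i j : Fin (2 * d), blk d r (j : ℕ) < blk d r (i : ℕ) →
      (g : Matrix (Fin (2 * d)) (Fin (2 * d)) R) i j = 0) ∧
    (∀ i j : Fin (2 * d), blk d r (i : ℕ) = 0 → blk d r (j : ℕ) = 0 →
      (g : Matrix (Fin (2 * d)) (Fin (2 * d)) R) i j = if i = j then (c : R) else 0) ∧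
    (∀ i j : Fin (2 * d), blk d r (i : ℕ) = 2 → blk d r (j : ℕ) = 2 →
      (g : Matrix (Fin (2 * d)) (Fin (2 * d)) R) i j = if i = j then 1 else 0)}

/-- The linear part `L_{ℓ,r}` of the Levi quotient of `P_r`: block diagonal symplectic
(similitude `1`) matrices with middle block the identity. -/
def LlrSet (d r : ℕ) (R : Type*) [CommRing R] : Set (GL (Fin (2 * d)) R) :=
  {g | (g : Matrix (Fin (2 * d)) (Fin (2 * d)) R)ᵀ * Jsymp d R *
      (g : Matrix (Fin (2 * d)) (Fin (2 * d)) R) = Jsymp d R ∧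
    (∀ i j : Fin (2 * d), blk d r (i : ℕ) ≠ blk d r (j : ℕ) →
      (g : Matrix (Fin (2 * d)) (Fin (2 * d)) R) i j = 0) ∧
    (∀ i j : Fin (2 * d), blk d r (i : ℕ) = 1 → blk d r (j : ℕ) = 1 →
      (g : Matrix (Fin (2 * d)) (Fin (2 * d)) R) i j = if i = j then 1 else 0)}

/-- `P_r(ℚ)`, viewed inside `GL_{2d}(𝔸_f)`. -/
def PrQinA (d r : ℕ) : Set (GL (Fin (2 * d)) AQf) := (glMap ratToA) '' (PrSet d r ℚ)

/-- `L_{ℓ,r}(ℚ)`, viewed inside `GL_{2d}(𝔸_f)`. -/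
def LlrQinA (d r : ℕ) : Set (GL (Fin (2 * d)) AQf) := (glMap ratToA) '' (LlrSet d r ℚ)

/-- `GSp_{2d}(Ẑ)`, viewed inside `GL_{2d}(𝔸_f)`. -/
def GSpZinA (d : ℕ) : Subgroup (GL (Fin (2 * d)) AQf) := (GSp d ↥ZHat).map (glMap zhatToA)

/-- The principal congruence subgroup `K_d(n) = Ker(GSp_{2d}(Ẑ) → GSp_{2d}(ℤ/nℤ))`. -/
def KdZ (d : ℕ) (n : ℕ+) : Subgroup (GL (Fin (2 * d)) ↥ZHat) :=
  GSp d ↥ZHat ⊓ (glMap (projZHat n)).ker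

/-- The principal congruence subgroup `K_d(n)`, viewed inside `GL_{2d}(𝔸_f)`. -/
def KdA (d : ℕ) (n : ℕ+) : Subgroup (GL (Fin (2 * d)) AQf) := (KdZ d n).map (glMap zhatToA)

/-!
The last `d` rows of `x ∈ GSp_{2d}(𝔸_f)` are made standard one at a time, starting from the bottom.
If the rows below the `i`-th are standard, the symplectic relations show that the entries of the
`i`-th row up to the diagonal generate the unit ideal. Since `ℚ` has class number one and `𝔸_f = ℚ +
Ẑ`, an upper triangular element of `GSp_{2d}(ℚ)` makes this row integral and unimodular. Since `Ẑ`
has stable range one, two symplectic transvections over `Ẑ` then carry it to a basis vector, and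
they fix the rows below. Once the last `d` rows are standard, the symplectic relations determine the
first `d` columns, so the element lies in every `Q_r`.
-/

section StableRange

lemma isIdempotentElem_pow_factorial_card {M : Type*} [Monoid M] [Finite M] (a : M) :
    IsIdempotentElem (a ^ (Nat.card M).factorial) := by
  have := Fintype.ofFinite M
  obtain ⟨x, y, hne, hpow⟩ := Fintype.exists_ne_map_eq_of_card_lt
    (fun i : Fin (Nat.card M + 1) => a ^ (i : ℕ)) (by simp)
  wlog hlt : x < y generalizing x y
  · exact this y x hne.symm hpow.symm (lt_of_le_of_ne (not_lt.1 hlt) hne.symm)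
  obtain ⟨t, hy⟩ := Nat.exists_eq_add_of_lt (Fin.lt_def.1 hlt)
  have hperiod (q : ℕ) : a ^ (x + (t + 1) * q : ℕ) = a ^ (x : ℕ) := by
    induction q with
    | zero => simp
    | succ q ih =>
      rw [show (x + (t + 1) * (q + 1) : ℕ) = (x + (t + 1) * q) + (t + 1) by ring, pow_add, ih,
        ← pow_add, ← add_assoc, ← hy]
      exact hpow.symm
  have hfac := Nat.self_le_factorial (Nat.card M)
  obtain ⟨q, hq⟩ : t + 1 ∣ (Nat.card M).factorial := Nat.dvd_factorial (by omega) (by omega)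
  obtain ⟨w, hw⟩ : ∃ w, (Nat.card M).factorial = x + w := Nat.exists_eq_add_of_le (by omega)
  calc a ^ (Nat.card M).factorial * a ^ (Nat.card M).factorial
      = a ^ (x + (t + 1) * q : ℕ) * a ^ w := by
        rw [← pow_add, ← pow_add, ← hq]
        congr 1
        omega
    _ = a ^ (Nat.card M).factorial := by rw [hperiod, ← pow_add, ← hw]

/-- Bass's condition `sr(R) = 1`: whenever `a` and `b` are coprime, some element of the coset
`a + R b` is a unit. -/
def HasStableRangeOne (R : Type*) [CommRing R] : Prop :=
  ∀ a b : R, IsCoprime a b → ∃ x, IsUnit (a + x * b)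

-- A prime contains exactly one of `a` and `1 - a ^ m`, so adding a multiple of `1 - a ^ m` changes
-- `a` only at the primes where it vanishes.
lemma isUnit_add_one_sub_pow_mul {R : Type*} [CommRing R] {a b : R} (hab : IsCoprime a b)
    {m : ℕ} (hm : m ≠ 0) (ha : IsIdempotentElem (a ^ m)) : IsUnit (a + (1 - a ^ m) * b) := by
  obtain ⟨k, rfl⟩ := Nat.exists_eq_succ_of_ne_zero hm
  have hcompl : IsCoprime (a + (1 - a ^ (k + 1)) * b) (1 - a ^ (k + 1)) :=
    IsCoprime.add_mul_left_left ⟨a ^ k, 1, by ring⟩ b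
  have hpow : IsCoprime (a + (1 - a ^ (k + 1)) * b) (a ^ (k + 1)) := by
    rw [show a + (1 - a ^ (k + 1)) * b = b + a * (1 - a ^ k * b) by ring]
    exact (hab.symm.add_mul_left_left _).pow_right
  have hzero : a ^ (k + 1) * (1 - a ^ (k + 1)) = 0 := by rw [mul_sub, mul_one, ha.eq, sub_self]
  rw [← isCoprime_zero_right, ← hzero]
  exact hpow.mul_right hcompl

end StableRange

namespace ZHat

lemma castHom_projZHat (x : ZHat) {m k : ℕ+} (h : (m : ℕ) ∣ k) :
    ZMod.castHom h (ZMod m) (projZHat k x) = projZHat m x :=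
  x.2 m k h

lemma ext_projZHat {x y : ZHat} (h : ∀ n, projZHat n x = projZHat n y) : x = y :=
  Subtype.ext (funext h)

lemma natCast_mul_eq_zero {N : ℕ} (hN : N ≠ 0) {x : ZHat} (hx : (N : ZHat) * x = 0) : x = 0 := by
  refine ext_projZHat fun n => ?_
  let M : ℕ+ := ⟨N, Nat.pos_of_ne_zero hN⟩
  obtain ⟨a, ha⟩ := ZMod.intCast_surjective (projZHat (n * M) x)
  have hNa : ((n * N : ℕ) : ℤ) ∣ N * a := by
    have h := congrArg (projZHat (n * M)) hx
    rw [map_mul, map_natCast, map_zero, ← ha] at h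
    refine (ZMod.intCast_zmod_eq_zero_iff_dvd _ (n * M : ℕ+)).1 ?_
    rwa [Int.cast_mul, Int.cast_natCast]
  have hna : ((n : ℕ) : ℤ) ∣ a := by
    rw [Nat.cast_mul, mul_comm] at hNa
    exact (mul_dvd_mul_iff_left (by exact_mod_cast hN)).1 hNa
  rw [← castHom_projZHat x (k := n * M) (by simp), ← ha, map_intCast, map_zero]
  exact (ZMod.intCast_zmod_eq_zero_iff_dvd _ _).2 hna

instance : Module.IsTorsionFree ℤ ZHat :=
  .of_smul_eq_zero fun r x h => or_iff_not_imp_left.2 fun hr =>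
    natCast_mul_eq_zero (Int.natAbs_ne_zero.2 hr) <| by
      rcases Int.natAbs_eq r with h' | h' <;> rw [h'] at h <;> simpa using h

lemma natCast_dvd_of_projZHat_eq_zero {N : ℕ+} {x : ZHat} (hx : projZHat N x = 0) :
    ((N : ℕ) : ZHat) ∣ x := by
  choose a ha using fun n : ℕ+ => ZMod.intCast_surjective (projZHat (n * N) x)
  have hNa (n : ℕ+) : ((N : ℕ) : ℤ) ∣ a n := by
    rw [← ZMod.intCast_zmod_eq_zero_iff_dvd, ← hx, ← castHom_projZHat x (k := n * N) (by simp),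
      ← ha, map_intCast]
  choose b hb using hNa
  have hN : ((N : ℕ) : ℤ) ≠ 0 := by exact_mod_cast N.ne_zero
  refine ⟨⟨fun n => (b n : ZMod n), fun m k h => ?_⟩, ext_projZHat fun n => ?_⟩
  · have hcompat := castHom_projZHat x (m := m * N) (k := k * N)
      (by simpa using Nat.mul_dvd_mul_right h N)
    rw [← ha, ← ha, map_intCast, ZMod.intCast_eq_intCast_iff_dvd_sub, hb, hb, ← mul_sub,
      PNat.mul_coe, Nat.cast_mul, mul_comm] at hcompat
    rw [map_intCast, ZMod.intCast_eq_intCast_iff_dvd_sub]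
    exact (mul_dvd_mul_iff_left hN).1 hcompat
  · rw [← castHom_projZHat x (k := n * N) (by simp), ← ha, map_intCast, hb, Int.cast_mul,
      Int.cast_natCast, map_mul, map_natCast]
    rfl

lemma exists_eq_intCast_add_natCast_mul {N : ℕ} (hN : N ≠ 0) (x : ZHat) :
    ∃ (a : ℤ) (y : ZHat), x = a + N * y := by
  let M : ℕ+ := ⟨N, Nat.pos_of_ne_zero hN⟩
  obtain ⟨a, ha⟩ := ZMod.intCast_surjective (projZHat M x)
  obtain ⟨y, hy⟩ : ((M : ℕ) : ZHat) ∣ x - a :=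
    natCast_dvd_of_projZHat_eq_zero (by rw [map_sub, map_intCast, ha, sub_self])
  exact ⟨a, y, sub_eq_iff_eq_add'.1 hy⟩

-- `Ẑ = ℤ + N Ẑ`, so an ideal containing `N` is generated by its trace on `ℤ`.
lemma exists_eq_span_intCast {I : Ideal ZHat} {N : ℕ} (hN : N ≠ 0) (hI : (N : ZHat) ∈ I) :
    ∃ D : ℤ, D ≠ 0 ∧ I = Ideal.span {(D : ZHat)} := by
  obtain ⟨D, hD⟩ := IsPrincipalIdealRing.principal (I.comap (Int.castRingHom ZHat))
  have mem_iff (a : ℤ) : (a : ZHat) ∈ I ↔ D ∣ a := by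
    rw [← Ideal.mem_span_singleton, Ideal.span, ← hD]
    rfl
  have hDN : D ∣ N := (mem_iff N).1 (by exact_mod_cast hI)
  refine ⟨D, by rintro rfl; simp_all, le_antisymm (fun x hx => ?_) ?_⟩
  · obtain ⟨a, y, rfl⟩ := exists_eq_intCast_add_natCast_mul hN x
    have hDa : D ∣ a := (mem_iff a).1 ((I.add_mem_iff_left (I.mul_mem_right y hI)).1 hx)
    have hDN' : (D : ZHat) ∣ N := by simpa using map_dvd (Int.castRingHom ZHat) hDN
    exact Ideal.mem_span_singleton.2
      (dvd_add (map_dvd (Int.castRingHom ZHat) hDa) (hDN'.mul_right y))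
  · exact (Ideal.span_singleton_le_iff_mem I).2 ((mem_iff D).2 dvd_rfl)

lemma isUnit_iff_forall_projZHat {x : ZHat} : IsUnit x ↔ ∀ n, IsUnit (projZHat n x) := by
  refine ⟨fun h n => h.map (projZHat n), fun h => ?_⟩
  choose y hy using fun n => (h n).exists_right_inv
  refine IsUnit.of_mul_eq_one ⟨y, fun m k hmk => ?_⟩ (ext_projZHat hy)
  refine left_inv_eq_right_inv (a := projZHat m x) ?_ (hy m)
  rw [← castHom_projZHat x hmk, ← map_mul, mul_comm, hy, map_one]

/-- The element of `Ẑ` whose component modulo `n` is `x ^ n!`.  It is the limit of the powers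
`x ^ n!`, namely the idempotent equal to `1` at the primes where `x` is a unit and `0` at the
others. -/
def powFactorial (x : ZHat) : ZHat :=
  ⟨fun n => projZHat n x ^ (n : ℕ).factorial, fun m k hmk => by
    have hm : IsIdempotentElem (projZHat m x ^ (m : ℕ).factorial) := by
      simpa using isIdempotentElem_pow_factorial_card (projZHat m x)
    obtain ⟨c, hc⟩ := Nat.factorial_dvd_factorial (Nat.le_of_dvd k.pos hmk)
    have hc0 : c ≠ 0 := by
      rintro rfl
      exact Nat.factorial_ne_zero _ hc
    rw [map_pow, castHom_projZHat x hmk, hc, pow_mul, hm.pow_eq hc0]⟩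

@[simp]
lemma projZHat_powFactorial (x : ZHat) (n : ℕ+) :
    projZHat n (powFactorial x) = projZHat n x ^ (n : ℕ).factorial :=
  rfl

lemma hasStableRangeOne : HasStableRangeOne ZHat := by
  refine fun a b hab => ⟨1 - powFactorial a, isUnit_iff_forall_projZHat.2 fun n => ?_⟩
  have hn : IsIdempotentElem (projZHat n a ^ (n : ℕ).factorial) := by
    simpa using isIdempotentElem_pow_factorial_card (projZHat n a)
  simpa using isUnit_add_one_sub_pow_mul (hab.map (projZHat n)) (Nat.factorial_ne_zero n) hn

end ZHat

/-- A vector is unimodular if its entries generate the unit ideal, i.e. if it pairs to `1` with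
some vector. -/
def IsUnimodular {ι R : Type*} [Fintype ι] [CommRing R] (v : ι → R) : Prop :=
  ∃ y, v ⬝ᵥ y = 1

namespace AQf

lemma zhatToA_injective : Function.Injective zhatToA :=
  Algebra.TensorProduct.includeLeft_injective (S := ℤ) (A := ZHat) (B := ℚ) Int.cast_injective

lemma exists_natCast_mul_eq_zhatToA {ι : Type*} [Finite ι] (v : ι → AQf) :
    ∃ N : ℕ, N ≠ 0 ∧ ∃ z : ι → ZHat, ∀ i, N * v i = zhatToA (z i) := by
  have := IsLocalization.tensor (S := ZHat) ℚ (nonZeroDivisors ℤ)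
  obtain ⟨⟨_, m, hm, rfl⟩, hb⟩ := IsLocalization.exist_integer_multiples_of_finite
    (Algebra.algebraMapSubmonoid ZHat (nonZeroDivisors ℤ)) v
  choose z hz using hb
  refine ⟨m.natAbs, Int.natAbs_ne_zero.2 (nonZeroDivisors.ne_zero hm),
    fun i => (m.sign : ZHat) * z i, fun i => ?_⟩
  have hz' : zhatToA (z i) = (m : AQf) * v i := by
    rw [← map_intCast (algebraMap ZHat AQf) m, ← Algebra.smul_def]
    exact hz i
  rw [map_mul, map_intCast, hz', ← mul_assoc, ← Int.cast_mul, Int.sign_mul_self_eq_natAbs,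
    Int.cast_natCast]

lemma ratToA_inv_natCast_mul {N : ℕ} (hN : N ≠ 0) : ratToA (N : ℚ)⁻¹ * N = 1 := by
  rw [← map_natCast ratToA, ← map_mul, inv_mul_cancel₀ (Nat.cast_ne_zero.2 hN), map_one]

lemma exists_eq_ratToA_add_zhatToA (x : AQf) : ∃ q z, x = ratToA q + zhatToA z := by
  obtain ⟨N, hN, z, hz⟩ := exists_natCast_mul_eq_zhatToA fun _ : Unit => x
  obtain ⟨a, y, hay⟩ := ZHat.exists_eq_intCast_add_natCast_mul hN (z ())
  have hx : N * x = a + N * zhatToA y := by simpa [hay] using hz ()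
  refine ⟨(N : ℚ)⁻¹ * a, y, ?_⟩
  rw [map_mul, map_intCast]
  linear_combination ratToA (N : ℚ)⁻¹ * hx + (zhatToA y - x) * ratToA_inv_natCast_mul hN

end AQf

-- The ideal generated by the entries of `w` contains `N`, hence is generated by an integer `D`.
lemma ZHat.exists_eq_intCast_smul_isUnimodular {ι : Type*} [Fintype ι] {w y : ι → ZHat} {N : ℕ}
    (hN : N ≠ 0) (hwy : w ⬝ᵥ y = N) :
    ∃ D : ℤ, D ≠ 0 ∧ ∃ u, IsUnimodular u ∧ w = D • u := by
  obtain ⟨D, hD, hI⟩ := exists_eq_span_intCast (I := Ideal.span (Set.range w)) hN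
    (hwy ▸ Ideal.mem_span_range_iff_exists_fun.2 ⟨y, by simp [dotProduct, mul_comm]⟩)
  choose u hu using fun i => Ideal.mem_span_singleton.1
    (hI ▸ Ideal.subset_span (Set.mem_range_self i) : w i ∈ Ideal.span {(D : ZHat)})
  obtain ⟨c, hc⟩ := Ideal.mem_span_range_iff_exists_fun.1
    (hI ▸ Ideal.mem_span_singleton_self _ : (D : ZHat) ∈ Ideal.span (Set.range w))
  refine ⟨D, hD, u, ⟨c, smul_right_injective ZHat hD ?_⟩, funext fun i => by simp [hu]⟩
  simp only [zsmul_eq_mul, mul_one]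
  rw [dotProduct, Finset.mul_sum]
  conv_rhs => rw [← hc]
  exact Finset.sum_congr rfl fun i _ => by rw [hu]; ring

lemma AQf.exists_eq_ratToA_mul_isUnimodular {ι : Type*} [Fintype ι] {v : ι → AQf}
    (hv : IsUnimodular v) :
    ∃ (t : ℚˣ) (u : ι → ZHat), IsUnimodular u ∧ ∀ i, v i = ratToA t * zhatToA (u i) := by
  obtain ⟨y, hvy⟩ := hv
  obtain ⟨N, hN, w, hw⟩ := exists_natCast_mul_eq_zhatToA v
  obtain ⟨M, hM, z, hz⟩ := exists_natCast_mul_eq_zhatToA y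
  have hwz : w ⬝ᵥ z = (N * M : ℕ) := by
    apply zhatToA_injective
    rw [RingHom.map_dotProduct, map_natCast, Nat.cast_mul, ← mul_one ((N : AQf) * M), ← hvy]
    simp only [dotProduct, Function.comp_apply, ← hw, ← hz, Finset.mul_sum]
    exact Finset.sum_congr rfl fun i _ => by ring
  obtain ⟨D, hD, u, hu, rfl⟩ :=
    ZHat.exists_eq_intCast_smul_isUnimodular (Nat.mul_ne_zero hN hM) hwz
  refine ⟨Units.mk0 ((N : ℚ)⁻¹ * D) (by positivity), u, hu, fun i => ?_⟩
  have hNv : N * v i = D * zhatToA (u i) := by simpa using hw i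
  rw [Units.val_mk0, map_mul, map_intCast]
  linear_combination ratToA (N : ℚ)⁻¹ * hNv - v i * ratToA_inv_natCast_mul hN

section SympForm

variable {d : ℕ} {R : Type*} [CommRing R]

/-- The sign of the nonzero entry of the `i`-th row of `J_{d,d}`. -/
def sympSign (R : Type*) [CommRing R] {d : ℕ} (i : Fin (2 * d)) : R :=
  if (i : ℕ) < d then 1 else -1

lemma sympSign_mul_self (i : Fin (2 * d)) : sympSign R i * sympSign R i = 1 := by
  unfold sympSign
  split_ifs <;> ring

lemma sympSign_rev (i : Fin (2 * d)) : sympSign R i.rev = -sympSign R i := by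
  unfold sympSign
  rw [Fin.val_rev]
  split_ifs <;> first | omega | ring

lemma Jsymp_apply (i j : Fin (2 * d)) :
    Jsymp d R i j = if j = i.rev then sympSign R i else 0 := by
  simp only [Jsymp, Matrix.of_apply, sympSign, Fin.ext_iff, Fin.val_rev]
  congr 1
  exact propext (by omega)

lemma Jsymp_mulVec_apply (y : Fin (2 * d) → R) (i : Fin (2 * d)) :
    (Jsymp d R *ᵥ y) i = sympSign R i * y i.rev := by
  simp [Matrix.mulVec, dotProduct, Jsymp_apply]

lemma Jsymp_mul_self : Jsymp d R * Jsymp d R = -1 := by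
  refine Matrix.ext_of_mulVec_single fun j => funext fun i => ?_
  rw [← Matrix.mulVec_mulVec, Jsymp_mulVec_apply, Jsymp_mulVec_apply, Fin.rev_rev, ← mul_assoc,
    sympSign_rev, mul_neg, sympSign_mul_self, Matrix.neg_mulVec, Matrix.one_mulVec]
  simp

lemma Jsymp_map {S : Type*} [CommRing S] (f : R →+* S) : (Jsymp d R).map f = Jsymp d S := by
  ext i j
  simp only [Matrix.map_apply, Jsymp, Matrix.of_apply]
  split_ifs <;> simp

/-- The symplectic form `(x, y) ↦ x · J_{d,d} · ᵗy` on row vectors.  Row vectors are used because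
the rows of a matrix `g` are the images of the standard basis under `x ↦ x · g`. -/
def sympForm (d : ℕ) (R : Type*) [CommRing R] : LinearMap.BilinForm R (Fin (2 * d) → R) :=
  Matrix.toBilin' (Jsymp d R)

namespace sympForm

lemma apply_eq_dotProduct (x y : Fin (2 * d) → R) :
    sympForm d R x y = x ⬝ᵥ Jsymp d R *ᵥ y :=
  Matrix.toBilin'_apply' _ _ _

lemma isAlt : (sympForm d R).IsAlt := fun x => by
  have hsum : sympForm d R x x = ∑ i, x i * (sympSign R i * x i.rev) := by
    simp only [apply_eq_dotProduct, dotProduct, Jsymp_mulVec_apply]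
  rw [hsum]
  refine Finset.sum_involution (fun i _ => i.rev) (fun i _ => ?_) (fun i _ _ h => ?_) (by simp)
    (by simp)
  · rw [sympSign_rev, Fin.rev_rev]
    ring
  · have := congrArg Fin.val h
    rw [Fin.val_rev] at this
    omega

lemma neg_swap (x y : Fin (2 * d) → R) : -sympForm d R x y = sympForm d R y x :=
  isAlt.neg_eq x y

lemma single_left (i : Fin (2 * d)) (y : Fin (2 * d) → R) :
    sympForm d R (Pi.single i 1) y = sympSign R i * y i.rev := by
  rw [apply_eq_dotProduct, single_one_dotProduct, Jsymp_mulVec_apply]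

lemma single_right (x : Fin (2 * d) → R) (i : Fin (2 * d)) :
    sympForm d R x (Pi.single i 1) = -(sympSign R i * x i.rev) := by
  rw [← neg_swap, single_left]

lemma exists_eq_dotProduct (y : Fin (2 * d) → R) :
    ∃ u, ∀ x, sympForm d R x u = x ⬝ᵥ y :=
  ⟨-(Jsymp d R *ᵥ y), fun x => by
    rw [apply_eq_dotProduct, Matrix.mulVec_neg, Matrix.mulVec_mulVec, Jsymp_mul_self,
      Matrix.neg_mulVec, Matrix.one_mulVec, neg_neg]⟩

lemma vecMul_vecMul (M : Matrix (Fin (2 * d)) (Fin (2 * d)) R) (x y : Fin (2 * d) → R) :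
    sympForm d R (x ᵥ* M) (y ᵥ* M) = Matrix.toBilin' (M * Jsymp d R * Mᵀ) x y := by
  rw [apply_eq_dotProduct, Matrix.toBilin'_apply', ← Matrix.mulVec_mulVec, ← Matrix.mulVec_mulVec,
    Matrix.mulVec_transpose, Matrix.dotProduct_mulVec x M]

end sympForm

lemma mul_mul_transpose_eq_smul {n : Type*} [Fintype n] [DecidableEq n] {J M : Matrix n n R}
    (hJ : J * J = -1) {c : Rˣ} (h : Mᵀ * J * M = (c : R) • J) : M * J * Mᵀ = (c : R) • J := by
  have hleft : -((c⁻¹ : Rˣ) : R) • (J * Mᵀ * J) * M = 1 := by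
    rw [smul_mul_assoc, mul_assoc, mul_assoc, ← mul_assoc Mᵀ, h, mul_smul_comm, hJ, smul_smul]
    simp
  have hright : M * J * Mᵀ * J = -(c : R) • 1 := by
    rw [← mul_eq_one_comm.1 hleft, mul_smul_comm, smul_smul]
    simp [mul_assoc]
  calc M * J * Mᵀ = -(M * J * Mᵀ * J * J) := by rw [mul_assoc _ J J, hJ, mul_neg_one, neg_neg]
    _ = (c : R) • J := by rw [hright, smul_mul_assoc, one_mul, neg_smul, neg_neg]

lemma isSimilitude_iff (M : Matrix (Fin (2 * d)) (Fin (2 * d)) R) (c : Rˣ) :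
    Mᵀ * Jsymp d R * M = (c : R) • Jsymp d R ↔
      ∀ x y, sympForm d R (x ᵥ* M) (y ᵥ* M) = c * sympForm d R x y := by
  have hswap : Mᵀ * Jsymp d R * M = (c : R) • Jsymp d R ↔
      M * Jsymp d R * Mᵀ = (c : R) • Jsymp d R :=
    ⟨mul_mul_transpose_eq_smul Jsymp_mul_self, fun h => by
      simpa using mul_mul_transpose_eq_smul (M := Mᵀ) Jsymp_mul_self (by simpa using h)⟩
  rw [hswap, ← (Matrix.toBilin' (n := Fin (2 * d)) (R₁ := R)).injective.eq_iff, LinearMap.ext_iff₂]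
  simp only [sympForm.vecMul_vecMul, map_smul]
  rfl

lemma mem_GSp_iff {g : GL (Fin (2 * d)) R} :
    g ∈ GSp d R ↔ ∃ c : Rˣ, ∀ x y,
      sympForm d R (x ᵥ* g.1) (y ᵥ* g.1) = c * sympForm d R x y := by
  simp only [← isSimilitude_iff]
  exact ⟨fun ⟨x, hx, hxg⟩ => ⟨x.2, hxg ▸ hx⟩, fun ⟨c, hc⟩ => ⟨(g, c), hc, rfl⟩⟩

lemma glMap_mem_GSp {S : Type*} [CommRing S] (f : R →+* S) {g : GL (Fin (2 * d)) R}
    (hg : g ∈ GSp d R) : glMap f g ∈ GSp d S := by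
  obtain ⟨⟨g, c⟩, hgc, rfl⟩ := hg
  refine ⟨(glMap f g, Units.map f c), ?_, rfl⟩
  have h := congrArg f.mapMatrix (show g.1ᵀ * Jsymp d R * g.1 = (c : R) • Jsymp d R from hgc)
  simp only [map_mul, RingHom.mapMatrix_apply, Jsymp_map] at h
  refine h.trans ?_
  ext i j
  simp [← Jsymp_map f]

lemma exists_mem_GSp_of_isometry (φ : (Fin (2 * d) → R) →ₗ[R] (Fin (2 * d) → R))
    (hφ : ∀ x y, sympForm d R (φ x) (φ y) = sympForm d R x y) :
    ∃ g ∈ GSp d R, ∀ x, x ᵥ* g.1 = φ x := by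
  let M := φ.toMatrixRight'
  have hM (x : Fin (2 * d) → R) : x ᵥ* M = φ x :=
    LinearMap.congr_fun (LinearMap.toMatrixRight'.symm_apply_apply φ) x
  have hsim : Mᵀ * Jsymp d R * M = ((1 : Rˣ) : R) • Jsymp d R :=
    (isSimilitude_iff M 1).2 fun x y => by rw [hM, hM, hφ, Units.val_one, one_mul]
  have hinv : -(Jsymp d R * Mᵀ * Jsymp d R) * M = 1 := by
    rw [neg_mul, mul_assoc, mul_assoc, ← mul_assoc Mᵀ, hsim, Units.val_one, one_smul,
      Jsymp_mul_self, neg_neg]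
  exact ⟨⟨M, _, mul_eq_one_comm.1 hinv, hinv⟩,
    mem_GSp_iff.2 ⟨1, (isSimilitude_iff M 1).1 hsim⟩, hM⟩

lemma exists_mem_GSp_transvection (u : Fin (2 * d) → R) (a : R) :
    ∃ g ∈ GSp d R, ∀ x, x ᵥ* g.1 = x + (a * sympForm d R x u) • u := by
  refine exists_mem_GSp_of_isometry
    (LinearMap.id + ((a • (sympForm d R).flip u).smulRight u)) fun x y => ?_
  simp only [LinearMap.add_apply, LinearMap.id_apply, LinearMap.smulRight_apply,
    LinearMap.smul_apply, LinearMap.BilinForm.flip_apply, map_add, map_smul, smul_eq_mul,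
    sympForm.isAlt.self_eq_zero u]
  linear_combination -(a * sympForm d R x u) * sympForm.neg_swap y u

-- For `c = 1` and `w ⊥ f` this is an Eichler transformation; otherwise it also scales the plane
-- spanned by `f` and `w`.
lemma exists_mem_GSp_eichler {f w : Fin (2 * d) → R} {c : R} (hc : c * (1 - sympForm d R w f) = 1) :
    ∃ g ∈ GSp d R, ∀ x,
      x ᵥ* g.1 = x + (c * sympForm d R x f) • w + sympForm d R x w • f := by
  refine exists_mem_GSp_of_isometry (LinearMap.id + (c • (sympForm d R).flip f).smulRight w +
    ((sympForm d R).flip w).smulRight f) fun x y => ?_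
  simp only [LinearMap.add_apply, LinearMap.id_apply, LinearMap.smulRight_apply,
    LinearMap.smul_apply, LinearMap.BilinForm.flip_apply, map_add, map_smul, smul_eq_mul,
    sympForm.isAlt.self_eq_zero, ← sympForm.neg_swap w f, ← sympForm.neg_swap y]
  linear_combination
    (sympForm d R x w * sympForm d R y f - sympForm d R y w * sympForm d R x f) * hc

lemma exists_mem_GSp_vecMul_eq_of_isUnit {v w : Fin (2 * d) → R}
    (hvw : IsUnit (sympForm d R v w)) :
    ∃ g ∈ GSp d R, v ᵥ* g.1 = w ∧
      ∀ z, sympForm d R z v = 0 → sympForm d R z w = 0 → z ᵥ* g.1 = z := by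
  obtain ⟨a, ha⟩ := hvw.exists_left_inv
  obtain ⟨g, hg, hmul⟩ := exists_mem_GSp_transvection (w - v) a
  refine ⟨g, hg, ?_, fun z hzv hzw => ?_⟩
  · rw [hmul, map_sub, sympForm.isAlt.self_eq_zero, sub_zero, ha, one_smul, add_sub_cancel]
  · rw [hmul, map_sub, hzv, hzw, sub_zero, mul_zero, zero_smul, add_zero]

-- Stable range one provides `w` with `⟨v, w⟩` and `⟨w, e⟩` both units: go from `v` to `w` to `e`.
lemma HasStableRangeOne.exists_mem_GSp_vecMul_eq (hR : HasStableRangeOne R)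
    {v y e f : Fin (2 * d) → R} (hvy : sympForm d R v y = 1) (hfe : sympForm d R f e = 1) :
    ∃ g ∈ GSp d R, v ᵥ* g.1 = e ∧ ∀ z, sympForm d R z v = 0 → sympForm d R z y = 0 →
      sympForm d R z e = 0 → sympForm d R z f = 0 → z ᵥ* g.1 = z := by
  have hcop : IsCoprime (sympForm d R v f) (1 - sympForm d R y e * sympForm d R v f) :=
    ⟨sympForm d R y e, 1, by ring⟩
  obtain ⟨x, hx⟩ := hR _ _ hcop
  let w := f + x • (y - sympForm d R y e • f)
  have hvw : IsUnit (sympForm d R v w) := by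
    simpa [w, hvy] using hx
  have hwe : IsUnit (sympForm d R w e) := by
    simp [w, hfe]
  obtain ⟨g, hg, hgv, hgz⟩ := exists_mem_GSp_vecMul_eq_of_isUnit hvw
  obtain ⟨h, hh, hhw, hhz⟩ := exists_mem_GSp_vecMul_eq_of_isUnit hwe
  refine ⟨g * h, mul_mem hg hh, ?_, fun z hzv hzy hze hzf => ?_⟩
  · rw [Units.val_mul, ← Matrix.vecMul_vecMul, hgv, hhw]
  · have hzw : sympForm d R z w = 0 := by simp [w, hzy, hzf]
    rw [Units.val_mul, ← Matrix.vecMul_vecMul, hgz z hzv hzw, hhz z hzw hze]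

/-- The Borel subgroup of upper triangular matrices in `GSp_{2d}`. -/
def GSpBorel (d : ℕ) (R : Type*) [CommRing R] : Subgroup (GL (Fin (2 * d)) R) where
  carrier := {g | g ∈ GSp d R ∧ g.1.BlockTriangular id}
  one_mem' := ⟨one_mem _, Matrix.blockTriangular_one⟩
  mul_mem' hg hh := ⟨mul_mem hg.1 hh.1, hg.2.mul hh.2⟩
  inv_mem' {g} hg := ⟨inv_mem hg.1, by
    have := g.invertible
    rw [Matrix.coe_units_inv]
    exact Matrix.blockTriangular_inv_of_blockTriangular hg.2⟩

lemma lt_of_blk_lt {r i j : ℕ} (h : blk d r i < blk d r j) : i < j := by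
  unfold blk at h
  split_ifs at h <;> omega

lemma GSpBorel_subset_PrSet (r : ℕ) : (GSpBorel d R : Set (GL (Fin (2 * d)) R)) ⊆ PrSet d r R :=
  fun _ hg => ⟨hg.1, fun i j hij => hg.2 (show j < i from Fin.lt_def.2 (lt_of_blk_lt hij))⟩

lemma exists_mem_GSpBorel_row_eq {i : Fin (2 * d)} (hi : d ≤ i) (t : Rˣ) {x : Fin (2 * d) → R}
    (hx : ∀ a ≤ i, x a = 0) :
    ∃ g ∈ GSpBorel d R, g.1 i = (t : R) • Pi.single i 1 + x ∧ ∀ a > i, g.1 a = Pi.single a 1 := by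
  have hsign : sympSign R i = -1 := if_neg (by omega)
  have hrev : i.rev < i := by rw [Fin.lt_def, Fin.val_rev]; omega
  let w := ((t⁻¹ : Rˣ) : R) • ((1 - t : R) • Pi.single i 1 - x)
  have hw (a : Fin (2 * d)) (ha : a < i) : w a = 0 := by simp [w, ha.ne, hx a ha.le]
  have hwi : w i = (t⁻¹ : Rˣ) * (1 - t) := by simp [w, hx]
  have hf (z : Fin (2 * d) → R) : sympForm d R z (Pi.single i.rev 1) = -z i := by
    rw [sympForm.single_right, sympSign_rev, hsign, Fin.rev_rev, neg_neg, one_mul]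
  obtain ⟨g, hg, hmul⟩ := exists_mem_GSp_eichler (f := Pi.single i.rev 1) (w := w) (c := t) <| by
    rw [hf, hwi]
    linear_combination (1 - t : R) * t.mul_inv
  have hrow (a : Fin (2 * d)) : g.1 a = Pi.single a 1 -
      ((t : R) * Pi.single (M := fun _ => R) a 1 i) • w +
        (sympSign R a * w a.rev) • Pi.single i.rev 1 := by
    rw [← sympForm.single_left, sub_eq_add_neg, ← neg_smul, ← mul_neg, ← hf, ← hmul,
      Matrix.single_one_vecMul]
    rfl
  refine ⟨g, ⟨hg, fun a b hba => ?_⟩, ?_, fun a ha => ?_⟩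
  · have hba : b < a := hba
    have hmid : Pi.single (M := fun _ => R) a 1 i * w b = 0 := by
      rcases eq_or_ne a i with rfl | hai
      · rw [hw b hba, mul_zero]
      · rw [Pi.single_eq_of_ne hai.symm, zero_mul]
    have hlast : w a.rev * Pi.single (M := fun _ => R) i.rev 1 b = 0 := by
      rcases lt_or_ge a.rev i with hai | hai
      · rw [hw _ hai, zero_mul]
      · rw [Pi.single_eq_of_ne (hba.trans_le (Fin.le_rev_iff.1 hai)).ne, mul_zero]
    rw [hrow]
    simp [mul_assoc, hmid, hlast, hba.ne]
  · rw [hrow, hw _ hrev]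
    simp only [w, smul_smul, sub_smul, one_smul, Pi.single_eq_same, mul_one, mul_zero, zero_smul,
      Units.mul_inv, add_zero]
    abel
  · rw [hrow, hw _ ((Fin.rev_lt_rev.2 ha).trans hrev)]
    simp [ha.ne']

lemma apply_rev_eq_of_row_eq_single {M : Matrix (Fin (2 * d)) (Fin (2 * d)) R} {c : R}
    (hM : ∀ x y, sympForm d R (x ᵥ* M) (y ᵥ* M) = c * sympForm d R x y) {b : Fin (2 * d)}
    (hb : M b = Pi.single b 1) (a : Fin (2 * d)) : M a b.rev = if a = b.rev then c else 0 := by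
  have h := hM (Pi.single a 1) (Pi.single b 1)
  simp only [Matrix.single_one_vecMul, Matrix.row_apply', hb, sympForm.single_right] at h
  have hMc : M a b.rev = c * Pi.single (M := fun _ => R) a 1 b.rev := by
    linear_combination (-sympSign R b) * h +
      (c * Pi.single (M := fun _ => R) a 1 b.rev - M a b.rev) * sympSign_mul_self (R := R) b
  simpa [Pi.single_apply, eq_comm] using hMc

lemma isUnimodular_indicator_row {M : Matrix (Fin (2 * d)) (Fin (2 * d)) R} {c : Rˣ}
    (hM : ∀ x y, sympForm d R (x ᵥ* M) (y ᵥ* M) = c * sympForm d R x y) {i : Fin (2 * d)}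
    (hi : ∀ a > i, M a = Pi.single a 1) : IsUnimodular ((Set.Iic i).indicator (M i)) := by
  have hpair : M i ⬝ᵥ Jsymp d R *ᵥ M i.rev = c * sympSign R i := by
    have h := hM (Pi.single i 1) (Pi.single i.rev 1)
    simpa only [Matrix.single_one_vecMul, Matrix.row_apply', sympForm.apply_eq_dotProduct,
      single_one_dotProduct, Jsymp_mulVec_apply, Pi.single_eq_same, mul_one] using h
  have hzero (a : Fin (2 * d)) (ha : i < a) : M i.rev a.rev = 0 := by
    rw [apply_rev_eq_of_row_eq_single hM (hi a ha), if_neg (Fin.rev_injective.ne ha.ne)]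
  have hindicator : (Set.Iic i).indicator (M i) ⬝ᵥ Jsymp d R *ᵥ M i.rev =
      M i ⬝ᵥ Jsymp d R *ᵥ M i.rev := Finset.sum_congr rfl fun a _ => by
    rcases le_or_gt a i with ha | ha
    · rw [Set.indicator_of_mem (Set.mem_Iic.2 ha)]
    · rw [Jsymp_mulVec_apply, hzero a ha, mul_zero, mul_zero, mul_zero]
  refine ⟨((c⁻¹ : Rˣ) * sympSign R i) • Jsymp d R *ᵥ M i.rev, ?_⟩
  rw [dotProduct_smul, hindicator, hpair, smul_eq_mul]
  linear_combination sympSign R i * sympSign R i * c.inv_mul + sympSign_mul_self (R := R) i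

lemma mem_QrSet_of_row_eq_single (r : ℕ) {g : GL (Fin (2 * d)) R} (hg : g ∈ GSp d R)
    (hrow : ∀ a : Fin (2 * d), d ≤ a → g.1 a = Pi.single a 1) : g ∈ QrSet d r R := by
  obtain ⟨c, hc⟩ := mem_GSp_iff.1 hg
  have hright {i : Fin (2 * d)} (hi : d ≤ i) (j : Fin (2 * d)) :
      g.1 i j = if i = j then 1 else 0 := by
    simp [hrow i hi, Pi.single_apply, eq_comm]
  have hleft (i : Fin (2 * d)) {j : Fin (2 * d)} (hj : j < d) :
      g.1 i j = if i = j then (c : R) else 0 := by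
    have hjrev : d ≤ (j.rev : ℕ) := by rw [Fin.val_rev]; omega
    simpa using apply_rev_eq_of_row_eq_single hc (hrow _ hjrev) i
  refine ⟨c, (isSimilitude_iff g.1 c).2 hc, fun i j hij => ?_, fun i j _ hj => hleft i ?_,
    fun i j hi _ => hright ?_ j⟩
  · have hji : i ≠ j := (Fin.lt_def.2 (lt_of_blk_lt hij)).ne'
    rcases le_or_gt d i with hi | hi
    · rw [hright hi, if_neg hji]
    · rw [hleft i ((lt_of_blk_lt hij).trans hi), if_neg hji]
  · unfold blk at hj
    split_ifs at hj
    omega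
  · unfold blk at hi
    split_ifs at hi <;> omega

end SympForm

section VecMul

variable {n R S : Type*} [CommRing R] [CommRing S]

lemma vecMul_eq_self_of_row_eq_single [Fintype n] [DecidableEq n] {M : Matrix n n R} {z : n → R}
    (h : ∀ a, z a ≠ 0 → M a = Pi.single a 1) : z ᵥ* M = z := by
  rw [Matrix.vecMul_eq_sum]
  calc ∑ a, z a • M a = ∑ a, z a • Pi.single a 1 := Finset.sum_congr rfl fun a _ => by
        by_cases ha : z a = 0
        · rw [ha, zero_smul, zero_smul]
        · rw [h a ha]
    _ = z := (pi_eq_sum_univ' z).symm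

lemma comp_single_one [DecidableEq n] (f : R →+* S) (a : n) :
    f ∘ Pi.single a 1 = Pi.single a 1 := by
  ext b
  simp [Pi.single_apply, apply_ite f]

lemma comp_vecMul_glMap {m : ℕ} (f : R →+* S) (z : Fin m → R) (g : GL (Fin m) R) :
    (f ∘ z) ᵥ* (glMap f g).1 = f ∘ (z ᵥ* g.1) :=
  funext fun i => (RingHom.map_vecMul f g.1 z i).symm

end VecMul

/-- The properties of `K = ℚ` and `O = Ẑ` inside `A = 𝔸_f` on which the decomposition rests:
strong approximation for the additive group, class number one, phrased for unimodular vectors,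
and stable range one for `O`. -/
structure IsAdelicPair {K O A : Type*} [CommRing K] [CommRing O] [CommRing A] (f : K →+* A)
    (g : O →+* A) : Prop where
  injective : Function.Injective g
  exists_eq_add : ∀ x, ∃ q z, x = f q + g z
  exists_eq_mul_isUnimodular : ∀ {n : ℕ} {v : Fin n → A}, IsUnimodular v →
    ∃ (t : Kˣ) (u : Fin n → O), IsUnimodular u ∧ ∀ i, v i = f t * g (u i)
  hasStableRangeOne : HasStableRangeOne O

lemma isAdelicPair_ratToA_zhatToA : IsAdelicPair ratToA zhatToA where
  injective := AQf.zhatToA_injective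
  exists_eq_add := AQf.exists_eq_ratToA_add_zhatToA
  exists_eq_mul_isUnimodular := AQf.exists_eq_ratToA_mul_isUnimodular
  hasStableRangeOne := ZHat.hasStableRangeOne

namespace IsAdelicPair

variable {K O A : Type*} [CommRing K] [CommRing O] [CommRing A] {f : K →+* A} {g : O →+* A}

lemma exists_integral {n : ℕ} (h : IsAdelicPair f g) (S : Set (Fin n)) {v : Fin n → A}
    (hv : IsUnimodular (S.indicator v)) :
    ∃ (t : Kˣ) (x : Fin n → K) (w y : Fin n → O), (∀ a ∈ S, x a = 0) ∧ (∀ a ∉ S, y a = 0) ∧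
      w ⬝ᵥ y = 1 ∧ f t • v + f ∘ x = g ∘ w := by
  classical
  obtain ⟨t, w, ⟨y, hwy⟩, hw⟩ := h.exists_eq_mul_isUnimodular hv
  have hinv : f (t⁻¹ : Kˣ) * f t = 1 := by rw [← map_mul, Units.inv_mul, map_one]
  have hw' (a : Fin n) : g (w a) = f (t⁻¹ : Kˣ) * S.indicator v a := by
    rw [hw, ← mul_assoc, hinv, one_mul]
  have hwS (a : Fin n) (ha : a ∉ S) : w a = 0 :=
    h.injective (by rw [hw', Set.indicator_of_notMem ha, mul_zero, map_zero])
  choose q z hqz using fun a => h.exists_eq_add (f (t⁻¹ : Kˣ) * v a)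
  refine ⟨t⁻¹, Sᶜ.indicator (-q), S.piecewise w z, S.indicator y, fun a ha => by simp [ha],
    fun a ha => by simp [ha], ?_, funext fun a => ?_⟩
  · rw [← hwy]
    refine Finset.sum_congr rfl fun a _ => ?_
    by_cases ha : a ∈ S
    · simp [ha]
    · simp [ha, hwS]
  · by_cases ha : a ∈ S
    · simp [ha, hw']
    · simp [ha, hqz]

variable {d : ℕ} {x : GL (Fin (2 * d)) A} {i : Fin (2 * d)}

lemma exists_integral_row (h : IsAdelicPair f g) (hx : x ∈ GSp d A) (hi : d ≤ i)
    (hrow : ∀ a > i, x.1 a = Pi.single a 1) :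
    ∃ b ∈ GSpBorel d K, (∀ a > i, (glMap f b * x).1 a = Pi.single a 1) ∧
      ∃ w y : Fin (2 * d) → O, (∀ a > i, y a = 0) ∧ w ⬝ᵥ y = 1 ∧
        (glMap f b * x).1 i = g ∘ w := by
  obtain ⟨c, hc⟩ := mem_GSp_iff.1 hx
  obtain ⟨t, z, w, y, hz, hy, hwy, hw⟩ :=
    h.exists_integral (Set.Iic i) (isUnimodular_indicator_row hc hrow)
  obtain ⟨b, hb, hbi, hba⟩ := exists_mem_GSpBorel_row_eq hi t hz
  have hmul (a : Fin (2 * d)) : (glMap f b * x).1 a = (f ∘ b.1 a) ᵥ* x.1 :=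
    Matrix.mul_apply_eq_vecMul _ _ a
  refine ⟨b, hb, fun a ha => ?_, w, y, fun a ha => hy a (by simpa using ha), hwy, ?_⟩
  · rw [hmul, hba a ha, comp_single_one, Matrix.single_one_vecMul, Matrix.row_apply', hrow a ha]
  · have hfix : (f ∘ z) ᵥ* x.1 = f ∘ z := vecMul_eq_self_of_row_eq_single fun a ha =>
      hrow a (lt_of_not_ge fun hai => ha (by simp [hz a hai]))
    have hbi' : f ∘ b.1 i = f t • Pi.single i 1 + f ∘ z := by
      rw [hbi, ← comp_single_one f i]
      ext a
      simp
    rw [hmul, hbi', Matrix.add_vecMul, Matrix.smul_vecMul, Matrix.single_one_vecMul,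
      Matrix.row_apply', hfix, hw]

lemma exists_row_eq_single_of_integral_row (h : IsAdelicPair f g) (hx : x ∈ GSp d A) (hi : d ≤ i)
    (hrow : ∀ a > i, x.1 a = Pi.single a 1) {w y : Fin (2 * d) → O} (hy : ∀ a > i, y a = 0)
    (hwy : w ⬝ᵥ y = 1) (hxi : x.1 i = g ∘ w) :
    ∃ k ∈ GSp d O, ∀ a ≥ i, (x * glMap g k).1 a = Pi.single a 1 := by
  obtain ⟨c, hc⟩ := mem_GSp_iff.1 hx
  obtain ⟨u, hu⟩ := sympForm.exists_eq_dotProduct y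
  have hpair : sympForm d O (Pi.single i.rev 1) (Pi.single i 1) = 1 := by
    have hsign : sympSign O i = -1 := if_neg (by omega)
    rw [sympForm.single_left, sympSign_rev, hsign, Fin.rev_rev, Pi.single_eq_same, neg_neg, mul_one]
  obtain ⟨k, hk, hkw, hkz⟩ :=
    h.hasStableRangeOne.exists_mem_GSp_vecMul_eq ((hu w).trans hwy) hpair
  have hmul (a : Fin (2 * d)) : (x * glMap g k).1 a = x.1 a ᵥ* (glMap g k).1 :=
    Matrix.mul_apply_eq_vecMul _ _ a
  refine ⟨k, hk, fun a ha => ?_⟩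
  obtain rfl | ha := eq_or_lt_of_le ha
  · rw [hmul, hxi, comp_vecMul_glMap, hkw, comp_single_one]
  have hrev : a.rev < i := by rw [Fin.lt_def, Fin.val_rev]; omega
  have hwa : w a.rev = 0 := h.injective <| by
    rw [map_zero, ← Function.comp_apply (f := g), ← hxi,
      apply_rev_eq_of_row_eq_single hc (hrow a ha), if_neg hrev.ne']
  have hfix : Pi.single a 1 ᵥ* k.1 = Pi.single a 1 := by
    apply hkz
    · rw [sympForm.single_left, hwa, mul_zero]
    · rw [hu, single_one_dotProduct, hy a ha]
    · rw [sympForm.single_left, Pi.single_eq_of_ne hrev.ne, mul_zero]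
    · rw [sympForm.single_left, Pi.single_eq_of_ne (Fin.rev_injective.ne ha.ne'), mul_zero]
  rw [hmul, hrow a ha, ← comp_single_one g, comp_vecMul_glMap, hfix]

lemma exists_bottom_rows_eq_single (h : IsAdelicPair f g) (hx : x ∈ GSp d A) (j : ℕ) (hj : j ≤ d) :
    ∃ b ∈ GSpBorel d K, ∃ k ∈ GSp d O, ∀ a : Fin (2 * d), 2 * d ≤ a + j →
      (glMap f b * x * glMap g k).1 a = Pi.single a 1 := by
  induction j with
  | zero => exact ⟨1, one_mem _, 1, one_mem _, fun a ha => by omega⟩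
  | succ j ih =>
    obtain ⟨b, hb, k, hk, hrow⟩ := ih (by omega)
    let i : Fin (2 * d) := ⟨2 * d - (j + 1), by omega⟩
    have hi : d ≤ i := by simp only [i]; omega
    have hmem := mul_mem (mul_mem (glMap_mem_GSp f hb.1) hx) (glMap_mem_GSp g hk)
    obtain ⟨b', hb', hrow', w, y, hy, hwy, hw⟩ := h.exists_integral_row hmem hi fun a ha =>
      hrow a (by rw [gt_iff_lt, Fin.lt_def] at ha; simp only [i] at ha; omega)
    obtain ⟨k', hk', hrow''⟩ := h.exists_row_eq_single_of_integral_row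
      (mul_mem (glMap_mem_GSp f hb'.1) hmem) hi hrow' hy hwy hw
    refine ⟨b' * b, mul_mem hb' hb, k * k', mul_mem hk hk', fun a ha => ?_⟩
    rw [map_mul, map_mul, ← hrow'' a (Fin.le_def.2 (by simp only [i]; omega))]
    simp only [mul_assoc]

end IsAdelicPair

theorem GSp_eq_Pr_Qr_GSpZhat_general {K O A : Type*} [CommRing K] [CommRing O] [CommRing A]
    {f : K →+* A} {g : O →+* A} (h : IsAdelicPair f g) {d : ℕ} (r : ℕ)
    {x : GL (Fin (2 * d)) A} (hx : x ∈ GSp d A) :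
    ∃ p ∈ GSpBorel d K, ∃ q ∈ QrSet d r A, ∃ k ∈ GSp d O, x = glMap f p * q * glMap g k := by
  obtain ⟨b, hb, k, hk, hrow⟩ := h.exists_bottom_rows_eq_single hx d le_rfl
  refine ⟨b⁻¹, inv_mem hb, glMap f b * x * glMap g k, ?_, k⁻¹, inv_mem hk, ?_⟩
  · exact mem_QrSet_of_row_eq_single r
      (mul_mem (mul_mem (glMap_mem_GSp f hb.1) hx) (glMap_mem_GSp g hk))
      fun a ha => hrow a (by omega)
  · rw [map_inv, map_inv]
    group

/-- Lemma 1.2.1: `GSp_{2d}(𝔸_f) = P_r(ℚ) · Q_r(𝔸_f) · GSp_{2d}(Ẑ)`. -/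
theorem GSp_eq_Pr_Qr_GSpZhat (d r : ℕ) (hd : 1 ≤ d) (hr : r ≤ d - 1) :
    ∀ g ∈ GSp d AQf, ∃ p ∈ PrQinA d r, ∃ q ∈ QrSet d r AQf, ∃ k ∈ GSpZinA d,
      g = p * q * k := by
  intro g hg
  obtain ⟨p, hp, q, hq, k, hk, hpqk⟩ :=
    GSp_eq_Pr_Qr_GSpZhat_general isAdelicPair_ratToA_zhatToA r hg
  exact ⟨_, ⟨p, GSpBorel_subset_PrSet r hp, rfl⟩, q, hq, _, ⟨k, hk, rfl⟩, hpqk⟩
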